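/- Let f : ℝ^n → ℝ be differentiable with L-Lipschitz continuous gradient for some L > 0, let λ > 0, and let x* ∈ ℝ^n with Z = { i : x*_i = 0 } and nondegeneracy |∂_i f(x*)| < λ for all i ∈ Z. Suppose the sequence (x^k) is generated by a coordinate-wise proximal gradient method: for each k there is a coordinate i_k such that x^{k+1}_j = x^k_j for all j ≠ i_k, and x^{k+1}_{i_k} = sign(z^k)·max(|z^k| − λ/L, 0) where z^k = x^k_{i_k} − (1/L)·∂_{i_k} f(x^k). If x^k → x*, then there exists a finite K such that x^k_i = 0 for all k ≥ K and all i ∈ Z. -/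

import Mathlib

/-!
On an active coordinate the argument of the soft-threshold operator tends to `-∂ᵢf(x*) / L`, which
by nondegeneracy lies strictly inside the dead zone `[-λ/L, λ/L]`. Hence, from some index on, each
step either sets this coordinate to zero or leaves it unchanged. A sequence of that kind which
converges to zero cannot stay at a nonzero value, so it reaches zero and remains there.
-/

open Filter Topology

/-- The soft-threshold operator, i.e. the proximal map of `τ * |·|` on `ℝ` when `0 ≤ τ`, written in
the closed form `sign z * max (|z| - τ) 0`. -/
noncomputable def softThreshold (τ z : ℝ) : ℝ :=
  Real.sign z * max (|z| - τ) 0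

lemma softThreshold_eq_zero_of_abs_le {τ z : ℝ} (hz : |z| ≤ τ) : softThreshold τ z = 0 := by
  rw [softThreshold, max_eq_right (sub_nonpos.2 hz), mul_zero]

lemma eventually_softThreshold_eq_zero {α : Type*} {l : Filter α} {z : α → ℝ} {w τ : ℝ}
    (hz : Tendsto z l (𝓝 w)) (hw : |w| < τ) : ∀ᶠ a in l, softThreshold τ (z a) = 0 :=
  (hz.abs.eventually_lt_const hw).mono fun _ ha => softThreshold_eq_zero_of_abs_le ha.le

lemma eventually_eq_of_tendsto_of_succ_eq_or_eq {X : Type*} [TopologicalSpace X] [T1Space X]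
    {a : ℕ → X} {c : X} (ha : Tendsto a atTop (𝓝 c))
    (hstep : ∀ᶠ k in atTop, a (k + 1) = a k ∨ a (k + 1) = c) : ∀ᶠ k in atTop, a k = c := by
  obtain ⟨N, hN⟩ := eventually_atTop.1 hstep
  have eq_or_eq : ∀ k ≥ N, a k = a N ∨ a k = c := by
    intro k hk
    induction k, hk using Nat.le_induction with
    | base => exact Or.inl rfl
    | succ k hk ih =>
      rcases hN k hk with hstay | hreach
      · rwa [hstay]
      · exact Or.inr hreach
  by_cases hNc : a N = c
  · filter_upwards [eventually_ge_atTop N] with k hk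
    simpa only [hNc, or_self] using eq_or_eq k hk
  · have leaves : ∀ᶠ k in atTop, a k ≠ a N := ha.eventually_ne (Ne.symm hNc)
    filter_upwards [eventually_ge_atTop N, leaves] with k hk hne
    exact (eq_or_eq k hk).resolve_left hne

lemma eventually_eq_zero_of_succ_eq_or_eq_softThreshold {L lam γ : ℝ} (hL : 0 < L) {a g : ℕ → ℝ}
    (ha : Tendsto a atTop (𝓝 0)) (hg : Tendsto g atTop (𝓝 γ)) (hγ : |γ| < lam)
    (hstep : ∀ k, a (k + 1) = a k ∨
      a (k + 1) = softThreshold (lam / L) (a k - (1 / L) * g k)) :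
    ∀ᶠ k in atTop, a k = 0 := by
  have hlim : Tendsto (fun k => a k - (1 / L) * g k) atTop (𝓝 (0 - (1 / L) * γ)) :=
    ha.sub (hg.const_mul (1 / L))
  have hdead : |0 - (1 / L) * γ| < lam / L := by
    rw [zero_sub, abs_neg, one_div_mul_eq_div, abs_div, abs_of_pos hL]
    gcongr
  refine eventually_eq_of_tendsto_of_succ_eq_or_eq ha ?_
  filter_upwards [eventually_softThreshold_eq_zero hlim hdead] with k hk
  simpa only [hk] using hstep k

lemma continuous_of_norm_sub_le_mul {E F : Type*} [SeminormedAddCommGroup E]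
    [SeminormedAddCommGroup F] {g : E → F} {C : ℝ} (hg : ∀ x y, ‖g x - g y‖ ≤ C * ‖x - y‖) :
    Continuous g :=
  (LipschitzWith.of_dist_le' (by simpa only [dist_eq_norm] using hg)).continuous

theorem stmt9_general {ι : Type*} [Finite ι] {L lam : ℝ} (hL : 0 < L)
    {g : EuclideanSpace ℝ ι → EuclideanSpace ℝ ι} {xstar : EuclideanSpace ℝ ι}
    (hg : ContinuousAt g xstar) (hnd : ∀ i, xstar i = 0 → |g xstar i| < lam)
    {x : ℕ → EuclideanSpace ℝ ι}
    (hstep : ∀ k i, x (k + 1) i = x k i ∨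
      x (k + 1) i = softThreshold (lam / L) (x k i - (1 / L) * g (x k) i))
    (hconv : Tendsto x atTop (𝓝 xstar)) :
    ∀ᶠ k in atTop, ∀ i, xstar i = 0 → x k i = 0 := by
  refine eventually_all.2 fun i => eventually_imp_distrib_left.2 fun hi => ?_
  have hcoord (y : EuclideanSpace ℝ ι) : Tendsto (fun v => v i) (𝓝 y) (𝓝 (y i)) :=
    (PiLp.continuous_apply 2 _ i).tendsto y
  have hx : Tendsto (fun k => x k i) atTop (𝓝 0) := hi ▸ (hcoord xstar).comp hconv
  have hgx : Tendsto (fun k => g (x k) i) atTop (𝓝 (g xstar i)) :=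
    (hcoord (g xstar)).comp (hg.tendsto.comp hconv)
  exact eventually_eq_zero_of_succ_eq_or_eq_softThreshold hL hx hgx (hnd i hi) fun k => hstep k i

theorem stmt9 (n : ℕ) (f : EuclideanSpace ℝ (Fin n) → ℝ) (hdiff : Differentiable ℝ f)
    (L : ℝ) (hL : 0 < L) (lam : ℝ) (hlam : 0 < lam)
    (hlip : ∀ x y : EuclideanSpace ℝ (Fin n), ‖gradient f x - gradient f y‖ ≤ L * ‖x - y‖)
    (xstar : EuclideanSpace ℝ (Fin n))
    (hnd : ∀ i, xstar i = 0 → |gradient f xstar i| < lam)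
    (x : ℕ → EuclideanSpace ℝ (Fin n)) (isel : ℕ → Fin n)
    (hupd1 : ∀ (k : ℕ) (j : Fin n), j ≠ isel k → x (k + 1) j = x k j)
    (hupd2 : ∀ k : ℕ,
      x (k + 1) (isel k) =
        Real.sign (x k (isel k) - (1 / L) * gradient f (x k) (isel k)) *
          max (|x k (isel k) - (1 / L) * gradient f (x k) (isel k)| - lam / L) 0)
    (hconv : Filter.Tendsto x Filter.atTop (nhds xstar)) :
    ∃ K : ℕ, ∀ k, K ≤ k → ∀ i, xstar i = 0 → x k i = 0 := by
  exact eventually_atTop.1 <|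
    stmt9_general hL (continuous_of_norm_sub_le_mul hlip).continuousAt hnd
      (fun k i => (ne_or_eq i (isel k)).imp (hupd1 k i) (by rintro rfl; exact hupd2 k)) hconv
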